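/- Let S be a finite set of n ≥ 2 points in the plane in convex position, and let uv be an edge of the convex hull of S. Then there exist two compatible trees T_A, T_B ∈ 𝒯(S), namely a spanning path consisting of edges of the convex hull of S and a spanning star centered at u or at v, such that both contain the edge uv and they share no other edge. -/

import Mathlib

open scoped Classical

noncomputable section

/-- Points in the plane. -/
abbrev Pt : Type := ℝ × ℝ

/-- The closed straight-line segment spanned by an (unordered) edge. -/
def segOf (e : Sym2 Pt) : Set Pt :=
  Sym2.lift ⟨fun p q => segment ℝ p q, fun p q => segment_symm ℝ p q⟩ e

/-- The set of endpoints of an edge. -/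
def epts (e : Sym2 Pt) : Set Pt := {p | p ∈ e}

/-- Two edges intersect in at most common endpoints (they do not cross). -/
def NoCrossPair (e f : Sym2 Pt) : Prop := segOf e ∩ segOf f ⊆ epts e ∩ epts f

/-- A set of edges is noncrossing: any two distinct edges meet in at most a common endpoint. -/
def NoCross (E : Finset (Sym2 Pt)) : Prop := ∀ e ∈ E, ∀ f ∈ E, e ≠ f → NoCrossPair e f

/-- `E` is the edge set of a noncrossing straight-line spanning tree on the point set `S`:
all edges are nondegenerate with endpoints in `S`, pairwise noncrossing, there are
`|S| - 1` of them, and they connect all of `S`. -/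
def IsPST (S : Finset Pt) (E : Finset (Sym2 Pt)) : Prop :=
  (∀ e ∈ E, ¬ e.IsDiag ∧ ∀ p ∈ e, p ∈ S) ∧
  NoCross E ∧ E.card + 1 = S.card ∧
  ∀ p ∈ S, ∀ q ∈ S, Relation.ReflTransGen (fun a b => s(a, b) ∈ E) p q

/-- `S` is in general position: no three of its points are collinear. -/
def GenPos (S : Finset Pt) : Prop :=
  ∀ p ∈ S, ∀ q ∈ S, ∀ r ∈ S, p ≠ q → p ≠ r → q ≠ r → ¬ Collinear ℝ ({p, q, r} : Set Pt)

/-- `S` is in convex position: every point of `S` is a vertex of the convex hull of `S`. -/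
def ConvexPos (S : Finset Pt) : Prop :=
  ∀ p ∈ S, p ∉ convexHull ℝ ((S : Set Pt) \ {p})

/-- The open interior of the triangle with vertices `p`, `q`, `r`. -/
def triInt (p q r : Pt) : Set Pt := interior (convexHull ℝ ({p, q, r} : Set Pt))

/-- `y` can be reached from `x` by a sequence of at most `m` `step`-operations. -/
def ReachesIn {α : Type*} (step : α → α → Prop) (m : ℕ) (x y : α) : Prop :=
  ∃ k ≤ m, ∃ f : ℕ → α, f 0 = x ∧ f k = y ∧ ∀ i < k, step (f i) (f (i + 1))

/-- A simultaneous rotation from `E₁` to `E₂`: a bijection `π` between the removed and the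
inserted edges such that each `e` shares an endpoint with `π e` and `π e` crosses no edge
of `E₁`. -/
def SimRotation (S : Finset Pt) (E₁ E₂ : Finset (Sym2 Pt)) : Prop :=
  IsPST S E₁ ∧ IsPST S E₂ ∧ ∃ π : Sym2 Pt → Sym2 Pt,
    Set.BijOn π ↑(E₁ \ E₂) ↑(E₂ \ E₁) ∧
    ∀ e ∈ E₁ \ E₂, (∃ p, p ∈ e ∧ p ∈ π e) ∧ ∀ f ∈ E₁, NoCrossPair (π e) f

/-- An empty-triangle rotation replaces an edge `pq` by an adjacent edge `pr` such that
no edge of either tree meets the interior of the triangle `pqr`. -/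
def EmptyTriRot (S : Finset Pt) (E₁ E₂ : Finset (Sym2 Pt)) : Prop :=
  IsPST S E₁ ∧ IsPST S E₂ ∧ ∃ p q r : Pt,
    E₁ \ E₂ = {s(p, q)} ∧ E₂ \ E₁ = {s(p, r)} ∧
    ∀ g ∈ E₁ ∪ E₂, Disjoint (segOf g) (triInt p q r)

/-- A simultaneous empty-triangle rotation. -/
def SimEmptyTriRot (S : Finset Pt) (E₁ E₂ : Finset (Sym2 Pt)) : Prop :=
  IsPST S E₁ ∧ IsPST S E₂ ∧ ∃ π : Sym2 Pt → Sym2 Pt,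
    Set.BijOn π ↑(E₁ \ E₂) ↑(E₂ \ E₁) ∧
    ∀ e ∈ E₁ \ E₂, ∃ p q r : Pt, e = s(p, q) ∧ π e = s(p, r) ∧
      ∀ g ∈ E₁ ∪ E₂, Disjoint (segOf g) (triInt p q r)

/-- An edge slide replaces `pq` by `pr`, where `qr` is an edge of both trees and no edge of
either tree meets the interior of the triangle `pqr`. -/
def EdgeSlide (S : Finset Pt) (E₁ E₂ : Finset (Sym2 Pt)) : Prop :=
  IsPST S E₁ ∧ IsPST S E₂ ∧ ∃ p q r : Pt,
    E₁ \ E₂ = {s(p, q)} ∧ E₂ \ E₁ = {s(p, r)} ∧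
    s(q, r) ∈ E₁ ∧ s(q, r) ∈ E₂ ∧
    ∀ g ∈ E₁ ∪ E₂, Disjoint (segOf g) (triInt p q r)

/-- A simultaneous edge slide. -/
def SimEdgeSlide (S : Finset Pt) (E₁ E₂ : Finset (Sym2 Pt)) : Prop :=
  IsPST S E₁ ∧ IsPST S E₂ ∧ ∃ π : Sym2 Pt → Sym2 Pt,
    Set.BijOn π ↑(E₁ \ E₂) ↑(E₂ \ E₁) ∧
    ∀ e ∈ E₁ \ E₂, ∃ p q r : Pt, e = s(p, q) ∧ π e = s(p, r) ∧
      s(q, r) ∈ E₁ ∧ s(q, r) ∈ E₂ ∧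
      ∀ g ∈ E₁ ∪ E₂, Disjoint (segOf g) (triInt p q r)

/-- `e` is an edge of the convex hull of `S`: it joins two distinct points of `S` and its
segment lies on the boundary of the convex hull of `S`. -/
def IsHullEdge (S : Finset Pt) (e : Sym2 Pt) : Prop :=
  ∃ u v : Pt, e = s(u, v) ∧ u ∈ S ∧ v ∈ S ∧ u ≠ v ∧
    segment ℝ u v ⊆ frontier (convexHull ℝ (S : Set Pt))

/-- The spanning star centered at `v`. -/
def starAt (S : Finset Pt) (v : Pt) : Finset (Sym2 Pt) := (S.erase v).image (fun w => s(v, w))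

/-- An edge-labeled tree: an edge set together with a labeling function. -/
abbrev LTree := Finset (Sym2 Pt) × (Sym2 Pt → ℕ)

/-- `T` is an edge-labeled noncrossing straight-line spanning tree on `S`: its edge set is in
`𝒯(S)` and its labeling is a bijection from the edges onto `{1, …, |S| - 1}`
(normalized to `0` on non-edges). -/
def IsLabeledPST (S : Finset Pt) (T : LTree) : Prop :=
  IsPST S T.1 ∧ Set.BijOn T.2 ↑T.1 (Set.Icc 1 (S.card - 1)) ∧ ∀ e, e ∉ T.1 → T.2 e = 0

/-- A simultaneous exchange on edge-labeled trees: an arbitrary bijection between removed and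
inserted edges transferring labels, all common edges keeping their labels. -/
def LabSimExchange (S : Finset Pt) (T₁ T₂ : LTree) : Prop :=
  IsLabeledPST S T₁ ∧ IsLabeledPST S T₂ ∧ ∃ π : Sym2 Pt → Sym2 Pt,
    Set.BijOn π ↑(T₁.1 \ T₂.1) ↑(T₂.1 \ T₁.1) ∧
    (∀ e ∈ T₁.1 \ T₂.1, T₂.2 (π e) = T₁.2 e) ∧
    ∀ e ∈ T₁.1 ∩ T₂.1, T₂.2 e = T₁.2 e

/-- A rotation on edge-labeled trees: the removed and inserted edges share an endpoint and do
not cross, the label of the removed edge is transferred, and all other labels are kept. -/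
def LabRotation (S : Finset Pt) (T₁ T₂ : LTree) : Prop :=
  IsLabeledPST S T₁ ∧ IsLabeledPST S T₂ ∧ ∃ e₁ e₂ : Sym2 Pt,
    T₁.1 \ T₂.1 = {e₁} ∧ T₂.1 \ T₁.1 = {e₂} ∧
    (∃ p, p ∈ e₁ ∧ p ∈ e₂) ∧ NoCrossPair e₁ e₂ ∧
    T₂.2 e₂ = T₁.2 e₁ ∧ ∀ e ∈ T₁.1 ∩ T₂.1, T₂.2 e = T₁.2 e

/-- An edge slide on edge-labeled trees, transferring the label of the slid edge. -/
def LabEdgeSlide (S : Finset Pt) (T₁ T₂ : LTree) : Prop :=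
  IsLabeledPST S T₁ ∧ IsLabeledPST S T₂ ∧ ∃ p q r : Pt,
    T₁.1 \ T₂.1 = {s(p, q)} ∧ T₂.1 \ T₁.1 = {s(p, r)} ∧
    s(q, r) ∈ T₁.1 ∧ s(q, r) ∈ T₂.1 ∧
    (∀ g ∈ T₁.1 ∪ T₂.1, Disjoint (segOf g) (triInt p q r)) ∧
    T₂.2 (s(p, r)) = T₁.2 (s(p, q)) ∧ ∀ e ∈ T₁.1 ∩ T₂.1, T₂.2 e = T₁.2 e

/-- Orientation determinant. -/
def ori (a b c : Pt) : ℝ := (b.1 - a.1) * (c.2 - a.2) - (b.2 - a.2) * (c.1 - a.1)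

lemma ori_comb (a b c d : Pt) (s t : ℝ) (h : s + t = 1) :
    ori a b (s • c + t • d) = s * ori a b c + t * ori a b d := by
  have : s = 1 - t := by linarith
  subst this
  simp only [ori, Prod.fst_add, Prod.snd_add, Prod.smul_fst, Prod.smul_snd, smul_eq_mul]
  ring

lemma ori_rot (a b c : Pt) : ori b c a = ori a b c := by simp only [ori]; ring
lemma ori_swap (a b c : Pt) : ori b a c = - ori a b c := by simp only [ori]; ring
lemma ori_left (a b : Pt) : ori a b a = 0 := by simp only [ori]; ring
lemma ori_right (a b : Pt) : ori a b b = 0 := by simp only [ori]; ring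
lemma ori_diag (a b : Pt) : ori a a b = 0 := by simp only [ori]; ring

lemma segOf_mk (a b : Pt) : segOf s(a, b) = segment ℝ a b := rfl

lemma noCross_side (a b c d : Pt) (hc : 0 < ori a b c) (hd : 0 < ori a b d) :
    NoCrossPair s(a, b) s(c, d) := by
  rintro z ⟨⟨s, t, hs, ht, hst, rfl⟩, ⟨s', t', hs', ht', hst', h⟩⟩
  exfalso
  have h1 := ori_comb a b a b s t hst
  rw [← h, ori_comb a b c d s' t' hst', ori_left, ori_right] at h1
  rcases hs'.lt_or_eq with h2 | h2
  · nlinarith [mul_pos h2 hc, mul_nonneg ht' hd.le]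
  · have : t' = 1 := by linarith
    subst this
    rw [← h2] at h1
    linarith

lemma noCross_share (a b d : Pt) (hd : ori a b d ≠ 0) :
    NoCrossPair s(a, b) s(a, d) := by
  rintro z ⟨⟨s, t, hs, ht, hst, rfl⟩, ⟨s', t', hs', ht', hst', h⟩⟩
  have h1 := ori_comb a b a b s t hst
  rw [← h, ori_comb a b a d s' t' hst', ori_left, ori_right] at h1
  have h2 : t' = 0 := by
    have : t' * ori a b d = 0 := by linarith
    exact (mul_eq_zero.1 this).resolve_right hd
  have h3 : s' = 1 := by linarith
  subst h2 h3
  rw [← h]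
  simp [epts]

lemma noCross_symm {e f : Sym2 Pt} (h : NoCrossPair e f) : NoCrossPair f e := by
  intro z hz
  exact ⟨(h ⟨hz.2, hz.1⟩).2, (h ⟨hz.2, hz.1⟩).1⟩

lemma tri_mem (a b c x : Pt) (h : 0 < ori a b c) (h1 : 0 ≤ ori a b x) (h2 : 0 ≤ ori b c x)
    (h3 : 0 ≤ ori c a x) : x ∈ convexHull ℝ ({a, b, c} : Set Pt) := by
  have hx : x = (ori b c x / ori a b c) • a + (ori c a x / ori a b c) • b
      + (ori a b x / ori a b c) • c := by
    have h0 := h.ne'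
    ext
    · simp only [Prod.fst_add, Prod.smul_fst, smul_eq_mul]
      field_simp
      simp only [ori]; ring
    · simp only [Prod.snd_add, Prod.smul_snd, smul_eq_mul]
      field_simp
      simp only [ori]; ring
  rw [convexHull_insert (by simp), mem_convexJoin]
  have hs : ori b c x / ori a b c + ori c a x / ori a b c + ori a b x / ori a b c = 1 := by
    have h0 := h.ne'
    field_simp
    simp only [ori]; ring
  have hc : Convex ℝ (convexHull ℝ ({a, b, c} : Set Pt)) := convex_convexHull _ _
  suffices hh : x ∈ convexHull ℝ ({a, b, c} : Set Pt) by
    rwa [convexHull_insert (by simp), mem_convexJoin] at hh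
  have ma : a ∈ convexHull ℝ ({a, b, c} : Set Pt) := subset_convexHull _ _ (by simp)
  have mb : b ∈ convexHull ℝ ({a, b, c} : Set Pt) := subset_convexHull _ _ (by simp)
  have mc : c ∈ convexHull ℝ ({a, b, c} : Set Pt) := subset_convexHull _ _ (by simp)
  have := hc.sum_mem (t := Finset.univ)
    (w := ![ori b c x / ori a b c, ori c a x / ori a b c, ori a b x / ori a b c])
    (z := ![a, b, c]) ?_ ?_ ?_
  · simp only [Fin.sum_univ_three] at this
    rw [hx]
    simpa using this
  · intro i _
    fin_cases i <;> simp <;> positivity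
  · simp only [Fin.sum_univ_three]
    simpa using hs
  · intro i _
    fin_cases i <;> simp [ma, mb, mc]

lemma convPos_ori {S : Finset Pt} (hS : ConvexPos S) {u a b c : Pt} (hu : u ∈ S) (ha : a ∈ S)
    (hb : b ∈ S) (hc : c ∈ S) (h1 : 0 < ori u a b) (h2 : 0 < ori u b c) (h3 : 0 < ori u a c) :
    0 < ori a b c := by
  by_contra hn
  push Not at hn
  apply hS b hb
  have hub : u ≠ b := by rintro rfl; rw [ori_diag] at h2; exact lt_irrefl _ h2
  have hab : a ≠ b := by rintro rfl; rw [ori_right] at h1; exact lt_irrefl _ h1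
  have hcb : c ≠ b := by rintro rfl; rw [ori_right] at h2; exact lt_irrefl _ h2
  refine convexHull_mono ?_ (tri_mem u a c b h3 h1.le ?_ ?_)
  · intro x hx
    simp only [Set.mem_insert_iff, Set.mem_singleton_iff] at hx
    rcases hx with rfl | rfl | rfl <;> simp [*]
  · have : ori a c b = - ori a b c := by simp only [ori]; ring
    linarith
  · have : ori c u b = ori u b c := by simp only [ori]; ring
    linarith

lemma convPos_ne {S : Finset Pt} (hS : ConvexPos S) {a b c : Pt} (ha : a ∈ S)
    (hb : b ∈ S) (hc : c ∈ S) (hab : a ≠ b) (hac : a ≠ c) (hbc : b ≠ c) : ori a b c ≠ 0 := by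
  intro h
  have hcol : Collinear ℝ ({a, b, c} : Set Pt) := by
    rw [collinear_iff_of_mem (p₀ := a) (by simp)]
    refine ⟨b - a, ?_⟩
    intro p hp
    simp only [Set.mem_insert_iff, Set.mem_singleton_iff] at hp
    rcases hp with rfl | rfl | rfl
    · exact ⟨0, by simp⟩
    · exact ⟨1, by simp⟩
    · simp only [ori] at h
      by_cases h1 : b.1 - a.1 = 0
      · have h2 : b.2 - a.2 ≠ 0 := by
          intro h2; apply hab; ext <;> linarith
        refine ⟨(p.2 - a.2) / (b.2 - a.2), ?_⟩
        ext
        · simp [h1]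
          rw [h1] at h
          have : (b.2 - a.2) * (p.1 - a.1) = 0 := by linarith
          have := (mul_eq_zero.1 this).resolve_left h2
          linarith
        · simp; field_simp; ring
      · refine ⟨(p.1 - a.1) / (b.1 - a.1), ?_⟩
        ext
        · simp; field_simp; ring
        · simp; field_simp; linarith
  have key : ∀ x ∈ S, ∀ y ∈ S, ∀ z ∈ S, x ≠ y → z ≠ y → ¬ Wbtw ℝ x y z := by
    intro x hx y hy z hz hxy hzy hw
    apply hS y hy
    rw [← mem_segment_iff_wbtw, ← convexHull_pair] at hw
    refine convexHull_mono ?_ hw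
    intro w hw
    simp only [Set.mem_insert_iff, Set.mem_singleton_iff] at hw
    rcases hw with rfl | rfl <;> simp [*]
  rcases hcol.wbtw_or_wbtw_or_wbtw with h | h | h
  · exact key _ ha _ hb _ hc hab hbc.symm h
  · exact key _ hb _ hc _ ha hbc hac h
  · exact key _ hc _ ha _ hb hac.symm hab.symm h

lemma ori_cont (a b : Pt) : Continuous (fun x => ori a b x) := by
  unfold ori; fun_prop

lemma hull_side {S : Finset Pt} {u v a b : Pt} (hu : u ∈ S) (hv : v ∈ S) (ha : a ∈ S) (hb : b ∈ S)
    (hf : segment ℝ u v ⊆ frontier (convexHull ℝ (S : Set Pt)))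
    (h1 : 0 < ori u v a) (h2 : ori u v b < 0) : False := by
  set m : Pt := (1/2 : ℝ) • u + (1/2 : ℝ) • v with hm
  have hmem : m ∈ segment ℝ u v := ⟨1/2, 1/2, by norm_num, by norm_num, by norm_num, rfl⟩
  have hfr := hf hmem
  rw [frontier] at hfr
  apply hfr.2
  rw [mem_interior]
  refine ⟨{x | 0 < ori v a x} ∩ {x | 0 < ori a u x} ∩ ({x | 0 < ori u b x} ∩ {x | 0 < ori b v x}),
    ?_, ?_, ?_⟩
  · rintro x ⟨⟨x1, x2⟩, ⟨x3, x4⟩⟩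
    simp only [Set.mem_ofPred_eq] at x1 x2 x3 x4
    rcases le_total 0 (ori u v x) with hx | hx
    · refine convexHull_mono ?_ (tri_mem u v a x h1 hx x1.le x2.le)
      intro w hw
      simp only [Set.mem_insert_iff, Set.mem_singleton_iff] at hw
      rcases hw with rfl | rfl | rfl <;> simp [*]
    · have h2' : 0 < ori v u b := by rw [ori_swap]; linarith
      refine convexHull_mono ?_ (tri_mem v u b x h2' (by rw [ori_swap]; linarith) x3.le x4.le)
      intro w hw
      simp only [Set.mem_insert_iff, Set.mem_singleton_iff] at hw
      rcases hw with rfl | rfl | rfl <;> simp [*]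
  · refine IsOpen.inter (IsOpen.inter ?_ ?_) (IsOpen.inter ?_ ?_) <;>
      exact isOpen_lt continuous_const (ori_cont _ _)
  · have e1 : ori v a u = ori u v a := by simp only [ori]; ring
    have e2 : ori a u v = ori u v a := by simp only [ori]; ring
    have e3 : ori u b v = - ori u v b := by simp only [ori]; ring
    have e4 : ori b v u = - ori u v b := by simp only [ori]; ring
    have hh : (1/2 : ℝ) + 1/2 = 1 := by norm_num
    simp only [Set.mem_inter_iff, Set.mem_ofPred_eq, hm, ori_comb _ _ _ _ _ _ hh, ori_left, ori_right,
      e1, e2, e3, e4]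
    refine ⟨⟨?_, ?_⟩, ?_, ?_⟩ <;> linarith

lemma hull_of_side {S : Finset Pt} {u v : Pt} (hu : u ∈ S) (hv : v ∈ S) (huv : u ≠ v)
    (h : ∀ x ∈ S, 0 ≤ ori u v x) : IsHullEdge S s(u, v) := by
  refine ⟨u, v, rfl, hu, hv, huv, ?_⟩
  have hsub : convexHull ℝ (S : Set Pt) ⊆ {x | 0 ≤ ori u v x} := by
    apply convexHull_min
    · intro x hx; exact h x hx
    · intro x hx y hy s t hs ht hst
      simp only [Set.mem_ofPred_eq] at *
      rw [ori_comb _ _ _ _ _ _ hst]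
      positivity
  intro z hz
  have hzK : z ∈ convexHull ℝ (S : Set Pt) :=
    (convex_convexHull ℝ _).segment_subset (subset_convexHull _ _ hu) (subset_convexHull _ _ hv) hz
  refine ⟨subset_closure hzK, ?_⟩
  intro hi
  have hz0 : ori u v z = 0 := by
    obtain ⟨s, t, hs, ht, hst, rfl⟩ := hz
    rw [ori_comb _ _ _ _ _ _ hst, ori_left, ori_right]; ring
  let n : Pt := (v.2 - u.2, -(v.1 - u.1))
  have hc : Continuous (fun t : ℝ => z + t • n) := by fun_prop
  have hev : ∀ᶠ t in nhds (0 : ℝ), z + t • n ∈ interior (convexHull ℝ (S : Set Pt)) := by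
    apply hc.continuousAt.eventually_mem
    simpa using isOpen_interior.mem_nhds hi
  obtain ⟨ε, he, hball⟩ := Metric.eventually_nhds_iff.1 hev
  have hin := hsub (interior_subset (hball (y := ε / 2) (by
    rw [Real.dist_eq, sub_zero, abs_of_pos (by linarith)]; linarith)))
  simp only [Set.mem_ofPred_eq] at hin
  have hval : ori u v (z + (ε / 2) • n)
      = ori u v z - (ε / 2) * ((v.1 - u.1) ^ 2 + (v.2 - u.2) ^ 2) := by
    simp only [ori, n, Prod.fst_add, Prod.snd_add, Prod.smul_fst, Prod.smul_snd, smul_eq_mul]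
    ring
  rw [hval, hz0] at hin
  have hpos : 0 < (v.1 - u.1) ^ 2 + (v.2 - u.2) ^ 2 := by
    by_contra hn
    have a1 : v.1 - u.1 = 0 := by nlinarith [sq_nonneg (v.1 - u.1), sq_nonneg (v.2 - u.2)]
    have a2 : v.2 - u.2 = 0 := by nlinarith [sq_nonneg (v.1 - u.1), sq_nonneg (v.2 - u.2)]
    apply huv; ext <;> linarith
  nlinarith [mul_pos (half_pos he) hpos]

lemma exists_enum {α : Type} [Inhabited α] (A : Finset α) (R : α → α → Prop)
    (hirr : ∀ x ∈ A, ¬ R x x) (htr : ∀ x ∈ A, ∀ y ∈ A, ∀ z ∈ A, R x y → R y z → R x z)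
    (htot : ∀ x ∈ A, ∀ y ∈ A, x ≠ y → R x y ∨ R y x) :
    ∃ p : ℕ → α, (∀ i < A.card, p i ∈ A) ∧ (∀ i j, i < j → j < A.card → R (p i) (p j)) ∧
      ∀ x ∈ A, ∃ i < A.card, p i = x := by
  let f : α → ℕ := fun x => (A.filter (fun y => R y x)).card
  have hmono : ∀ x ∈ A, ∀ y ∈ A, R x y → f x < f y := by
    intro x hx y hy hxy
    apply Finset.card_lt_card
    rw [Finset.ssubset_iff_of_subset]
    · exact ⟨x, by simp [hx, hxy], by simp [hirr x hx]⟩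
    · intro z hz
      simp only [Finset.mem_filter] at hz ⊢
      exact ⟨hz.1, htr z hz.1 x hx y hy hz.2 hxy⟩
  have hlt : ∀ x ∈ A, f x < A.card := by
    intro x hx
    apply Finset.card_lt_card
    rw [Finset.ssubset_iff_of_subset (Finset.filter_subset _ _)]
    exact ⟨x, hx, by simp [hirr x hx]⟩
  have hinj : ∀ x ∈ A, ∀ y ∈ A, f x = f y → x = y := by
    intro x hx y hy h
    by_contra hne
    rcases htot x hx y hy hne with h1 | h1
    · have := hmono _ hx _ hy h1; omega
    · have := hmono _ hy _ hx h1; omega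
  have himg : A.image f = Finset.range A.card := by
    apply Finset.eq_of_subset_of_card_le
    · intro i hi
      obtain ⟨x, hx, rfl⟩ := Finset.mem_image.1 hi
      exact Finset.mem_range.2 (hlt x hx)
    · rw [Finset.card_range, Finset.card_image_of_injOn (fun x hx y hy h => hinj x hx y hy h)]
  have hsurj : ∀ i, ∃ x, i < A.card → x ∈ A ∧ f x = i := by
    intro i
    by_cases hi : i < A.card
    · have : i ∈ A.image f := by rw [himg]; exact Finset.mem_range.2 hi
      obtain ⟨x, hx, hfx⟩ := Finset.mem_image.1 this
      exact ⟨x, fun _ => ⟨hx, hfx⟩⟩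
    · exact ⟨default, fun h => absurd h hi⟩
  choose p hp using hsurj
  refine ⟨p, fun i hi => (hp i hi).1, ?_, ?_⟩
  · intro i j hij hj
    have h1 := hp i (by omega)
    have h2 := hp j hj
    have hne : p i ≠ p j := by
      intro h; rw [h] at h1; omega
    rcases htot _ h1.1 _ h2.1 hne with h | h
    · exact h
    · have := hmono _ h2.1 _ h1.1 h; omega
  · intro x hx
    exact ⟨f x, hlt x hx, hinj _ (hp _ (hlt x hx)).1 _ hx (hp _ (hlt x hx)).2⟩

lemma core (S : Finset Pt) (n : ℕ) (hn : 2 ≤ n) (hcard : S.card = n) (P : ℕ → Pt)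
    (hmem : ∀ i < n, P i ∈ S) (hsurj : ∀ x ∈ S, ∃ i < n, P i = x)
    (hne : ∀ i j, i < j → j < n → P i ≠ P j)
    (hpos : ∀ i j k, i < j → j < k → k < n → 0 < ori (P i) (P j) (P k)) :
    ∃ E_A : Finset (Sym2 Pt), IsPST S E_A ∧ IsPST S (starAt S (P 0)) ∧
        (∀ e ∈ E_A, IsHullEdge S e) ∧
        s(P 0, P 1) ∈ E_A ∧ s(P 0, P 1) ∈ starAt S (P 0) ∧
        E_A ∩ starAt S (P 0) = {s(P 0, P 1)} ∧ NoCross (E_A ∪ starAt S (P 0)) := by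
  have hinj : ∀ i < n, ∀ j < n, P i = P j → i = j := by
    intro i hi j hj h
    rcases lt_trichotomy i j with h1 | h1 | h1
    · exact absurd h (hne i j h1 hj)
    · exact h1
    · exact absurd h.symm (hne j i h1 hi)
  have hside : ∀ i, i + 1 < n → ∀ k < n, k ≠ i → k ≠ i + 1 →
      0 < ori (P i) (P (i + 1)) (P k) := by
    intro i hi k hk h1 h2
    rcases lt_or_gt_of_ne h1 with h | h
    · rw [ori_rot (P k)]; exact hpos k i (i + 1) h (by omega) hi
    · exact hpos i (i + 1) k (by omega) (by omega) hk
  have hE : ∀ i, i + 1 < n → ∀ j < n, ∀ k < n, j ≠ k → s(P i, P (i + 1)) ≠ s(P j, P k) →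
      NoCrossPair s(P i, P (i + 1)) s(P j, P k) := by
    have main : ∀ i, i + 1 < n → ∀ k < n, k ≠ i → k ≠ i + 1 → 
        NoCrossPair s(P i, P (i + 1)) s(P i, P k) ∧
        NoCrossPair s(P i, P (i + 1)) s(P (i + 1), P k) := by
      intro i hi k hk h1 h2
      have := hside i hi k hk h1 h2
      refine ⟨noCross_share _ _ _ this.ne', ?_⟩
      rw [Sym2.eq_swap (a := P i)]
      apply noCross_share
      rw [ori_swap]; linarith
    intro i hi j hj k hk hjk hef
    by_cases j1 : j = i
    · subst j1
      exact (main j hi k hk (Ne.symm hjk) (by rintro rfl; exact hef rfl)).1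
    by_cases j2 : j = i + 1
    · subst j2
      exact (main i hi k hk (by rintro rfl; exact hef Sym2.eq_swap) (Ne.symm hjk)).2
    by_cases k1 : k = i
    · subst k1
      rw [Sym2.eq_swap (a := P j)]
      exact (main k hi j hj j1 j2).1
    by_cases k2 : k = i + 1
    · subst k2
      rw [Sym2.eq_swap (a := P j)]
      exact (main i hi j hj j1 j2).2
    exact noCross_side _ _ _ _ (hside i hi j hj j1 j2) (hside i hi k hk k1 k2)
  set E : Finset (Sym2 Pt) := (Finset.range (n - 1)).image (fun i => s(P i, P (i + 1))) with hEdef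
  have memE : ∀ e, e ∈ E ↔ ∃ i, i + 1 < n ∧ e = s(P i, P (i + 1)) := by
    intro e
    simp only [hEdef, Finset.mem_image, Finset.mem_range]
    constructor
    · rintro ⟨i, hi, rfl⟩; exact ⟨i, by omega, rfl⟩
    · rintro ⟨i, hi, rfl⟩; exact ⟨i, by omega, rfl⟩
  have memB : ∀ e, e ∈ starAt S (P 0) ↔ ∃ k, 0 < k ∧ k < n ∧ e = s(P 0, P k) := by
    intro e
    simp only [starAt, Finset.mem_image, Finset.mem_erase]
    constructor
    · rintro ⟨w, ⟨hw0, hw⟩, rfl⟩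
      obtain ⟨k, hk, rfl⟩ := hsurj w hw
      refine ⟨k, ?_, hk, rfl⟩
      rcases Nat.eq_zero_or_pos k with rfl | h
      · exact absurd rfl hw0
      · exact h
    · rintro ⟨k, h0, hk, rfl⟩
      exact ⟨P k, ⟨(hne 0 k h0 hk).symm, hmem k hk⟩, rfl⟩
  have hAll : NoCross (E ∪ starAt S (P 0)) := by
    intro e he f hf hef
    rw [Finset.mem_union, memE, memB] at he hf
    rcases he with ⟨i, hi, rfl⟩ | ⟨k, hk0, hk, rfl⟩ <;>
      rcases hf with ⟨j, hj, rfl⟩ | ⟨l, hl0, hl, rfl⟩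
    · exact hE i hi _ (by omega) _ hj (by omega) hef
    · exact hE i hi _ (by omega) _ hl (by omega) hef
    · exact noCross_symm (hE j hj _ (by omega) _ hk (by omega) hef.symm)
    · have hkl : k ≠ l := by rintro rfl; exact hef rfl
      apply noCross_share
      rcases lt_or_gt_of_ne hkl with h | h
      · exact (hpos 0 k l hk0 h hl).ne'
      · have := hpos 0 l k hl0 h hk
        have e : ori (P 0) (P k) (P l) = - ori (P 0) (P l) (P k) := by simp only [ori]; ring
        rw [e]; linarith
  have reach : ∀ F : Finset (Sym2 Pt),
      (∀ i < n, Relation.ReflTransGen (fun a b => s(a, b) ∈ F) (P 0) (P i)) →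
      ∀ p ∈ S, ∀ q ∈ S, Relation.ReflTransGen (fun a b => s(a, b) ∈ F) p q := by
    intro F h p hp q hq
    obtain ⟨i, hi, rfl⟩ := hsurj p hp
    obtain ⟨j, hj, rfl⟩ := hsurj q hq
    refine Relation.ReflTransGen.trans ?_ (h j hj)
    have hs : ∀ x, Relation.ReflTransGen (fun a b => s(a, b) ∈ F) (P 0) x →
        Relation.ReflTransGen (fun a b => s(a, b) ∈ F) x (P 0) := by
      intro x hx
      induction hx with
      | refl => exact Relation.ReflTransGen.refl
      | tail _ hbc ih =>
        refine Relation.ReflTransGen.head ?_ ih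
        rwa [Sym2.eq_swap]
    exact hs _ (h i hi)
  refine ⟨E, ⟨?_, ?_, ?_, ?_⟩, ⟨?_, ?_, ?_, ?_⟩, ?_, ?_, ?_, ?_, hAll⟩
  · intro e he
    obtain ⟨i, hi, rfl⟩ := (memE e).1 he
    refine ⟨by simpa using hne i (i + 1) (by omega) hi, ?_⟩
    intro p hp
    rcases Sym2.mem_iff.1 hp with rfl | rfl
    · exact hmem _ (by omega)
    · exact hmem _ hi
  · intro e he f hf
    exact hAll e (Finset.mem_union_left _ he) f (Finset.mem_union_left _ hf)
  · rw [hEdef, Finset.card_image_of_injOn, Finset.card_range]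
    · omega
    · intro i hi j hj h
      simp only [Finset.coe_range, Set.mem_Iio] at hi hj
      simp only [Sym2.eq_iff] at h
      rcases h with ⟨h, _⟩ | ⟨h, h'⟩
      · exact hinj i (by omega) j (by omega) h
      · have := hinj i (by omega) (j + 1) (by omega) h
        have := hinj (i + 1) (by omega) j (by omega) h'
        omega
  · apply reach
    intro i
    induction i with
    | zero => intro _; exact Relation.ReflTransGen.refl
    | succ i ih =>
      intro hi
      exact (ih (by omega)).tail ((memE _).2 ⟨i, hi, rfl⟩)
  · intro e he
    obtain ⟨k, hk0, hk, rfl⟩ := (memB e).1 he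
    refine ⟨by simpa using hne 0 k hk0 hk, ?_⟩
    intro p hp
    rcases Sym2.mem_iff.1 hp with rfl | rfl
    · exact hmem _ (by omega)
    · exact hmem _ hk
  · intro e he f hf
    exact hAll e (Finset.mem_union_right _ he) f (Finset.mem_union_right _ hf)
  · rw [starAt, Finset.card_image_of_injective, Finset.card_erase_of_mem (hmem 0 (by omega))]
    · omega
    · intro a b h
      rcases Sym2.eq_iff.1 h with ⟨_, h⟩ | ⟨h1, h2⟩
      · exact h
      · exact h2.trans h1
  · apply reach
    intro i hi
    rcases Nat.eq_zero_or_pos i with rfl | h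
    · exact Relation.ReflTransGen.refl
    · exact Relation.ReflTransGen.single ((memB _).2 ⟨i, h, hi, rfl⟩)
  · intro e he
    obtain ⟨i, hi, rfl⟩ := (memE e).1 he
    refine hull_of_side (hmem _ (by omega)) (hmem _ hi) (hne i (i + 1) (by omega) hi) ?_
    intro x hx
    obtain ⟨k, hk, rfl⟩ := hsurj x hx
    by_cases h1 : k = i
    · subst h1; rw [ori_left]
    by_cases h2 : k = i + 1
    · subst h2; rw [ori_right]
    exact (hside i hi k hk h1 h2).le
  · exact (memE _).2 ⟨0, by omega, rfl⟩
  · exact (memB _).2 ⟨1, by omega, by omega, rfl⟩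
  · ext e
    rw [Finset.mem_inter, memE, memB, Finset.mem_singleton]
    constructor
    · rintro ⟨⟨i, hi, rfl⟩, ⟨k, hk0, hk, h⟩⟩
      rcases Sym2.eq_iff.1 h with ⟨h, _⟩ | ⟨_, h'⟩
      · have := hinj i (by omega) 0 (by omega) h
        subst this; rfl
      · have := hinj (i + 1) (by omega) 0 (by omega) h'
        omega
    · rintro rfl
      exact ⟨⟨0, by omega, rfl⟩, ⟨1, by omega, by omega, rfl⟩⟩

lemma oriented (S : Finset Pt) (hS : ConvexPos S) (u v : Pt) (hu : u ∈ S) (hv : v ∈ S)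
    (huv : u ≠ v) (hside : ∀ x ∈ S, x ≠ u → x ≠ v → 0 < ori u v x) :
    ∃ E_A : Finset (Sym2 Pt), IsPST S E_A ∧ IsPST S (starAt S u) ∧
        (∀ e ∈ E_A, IsHullEdge S e) ∧
        s(u, v) ∈ E_A ∧ s(u, v) ∈ starAt S u ∧
        E_A ∩ starAt S u = {s(u, v)} ∧ NoCross (E_A ∪ starAt S u) := by
  have htot : ∀ x ∈ S.erase u, ∀ y ∈ S.erase u, x ≠ y → 0 < ori u x y ∨ 0 < ori u y x := by
    intro x hx y hy hxy
    rw [Finset.mem_erase] at hx hy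
    have h := convPos_ne hS hu hx.2 hy.2 hx.1.symm hy.1.symm hxy
    have e : ori u y x = - ori u x y := by simp only [ori]; ring
    rw [e]
    rcases lt_or_gt_of_ne h with h | h
    · right; linarith
    · left; exact h
  have hv0 : ∀ y ∈ S.erase u, ¬ 0 < ori u y v := by
    intro y hy h
    rw [Finset.mem_erase] at hy
    have e : ori u y v = - ori u v y := by simp only [ori]; ring
    by_cases hyv : y = v
    · subst hyv; rw [ori_right] at h; exact lt_irrefl _ h
    · have := hside y hy.2 hy.1 hyv
      linarith
  obtain ⟨p, hp1, hp2, hp3⟩ := exists_enum (S.erase u) (fun x y => 0 < ori u x y)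
    (by intro x _; simp [ori_right])
    (by
      intro x hx y hy z hz hxy hyz
      by_cases hxv : x = v
      · subst hxv
        rw [Finset.mem_erase] at hz
        refine hside z hz.2 hz.1 ?_
        rintro rfl
        exact hv0 y hy hyz
      have hyv : y ≠ v := by rintro rfl; exact hv0 x hx hxy
      have hzv : z ≠ v := by rintro rfl; exact hv0 y hy hyz
      rw [Finset.mem_erase] at hx hy hz
      have h1 := hside x hx.2 hx.1 hxv
      have h2 := hside y hy.2 hy.1 hyv
      have h3 := hside z hz.2 hz.1 hzv
      have key : ori u v y * ori u x z = ori u v z * ori u x y + ori u v x * ori u y z := by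
        simp only [ori]; ring
      have : 0 < ori u v y * ori u x z := by rw [key]; positivity
      exact (pos_iff_pos_of_mul_pos this).1 h2)
    htot
  have hc : (S.erase u).card + 1 = S.card := Finset.card_erase_add_one hu
  have hvA : v ∈ S.erase u := Finset.mem_erase.2 ⟨huv.symm, hv⟩
  have hcpos : 0 < (S.erase u).card := Finset.card_pos.2 ⟨v, hvA⟩
  have hp0 : p 0 = v := by
    obtain ⟨i, hi, h⟩ := hp3 v hvA
    rcases Nat.eq_zero_or_pos i with rfl | h0
    · exact h
    · have := hp2 0 i h0 hi
      simp only [h] at this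
      exact absurd this (hv0 _ (hp1 0 hcpos))
  have hpS : ∀ i < (S.erase u).card, p i ∈ S := fun i hi => Finset.mem_of_mem_erase (hp1 i hi)
  let P : ℕ → Pt := fun i => Nat.casesOn i u p
  have hP : ∀ i, P (i + 1) = p i := fun _ => rfl
  have hP0 : P 0 = u := rfl
  have := core S S.card (by omega) rfl P ?_ ?_ ?_ ?_
  · simpa only [hP0, hP 0, hp0, show P 1 = v from hp0] using this
  · rintro (_ | i) hi
    · exact hu
    · exact hpS i (by omega)
  · intro x hx
    by_cases h : x = u
    · exact ⟨0, by omega, h.symm⟩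
    · obtain ⟨i, hi, h⟩ := hp3 x (Finset.mem_erase.2 ⟨h, hx⟩)
      exact ⟨i + 1, by omega, h⟩
  · rintro (_ | i) (_ | j) hij hj h
    · omega
    · rw [hP0, hP] at h
      exact Finset.ne_of_mem_erase (hp1 j (by omega)) h.symm
    · omega
    · rw [hP, hP] at h
      have := hp2 i j (by omega) (by omega)
      simp only [h, ori_right] at this
      exact lt_irrefl _ this
  · rintro (_ | i) (_ | j) (_ | k) hij hjk hk
    any_goals omega
    · exact hp2 j k (by omega) (by omega)
    · exact convPos_ori hS hu (hpS i (by omega)) (hpS j (by omega)) (hpS k (by omega))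
        (hp2 i j (by omega) (by omega)) (hp2 j k (by omega) (by omega))
        (hp2 i k (by omega) (by omega))

/-- for any hull edge `uv` of a point set in convex position there are two
compatible trees — a path of hull edges and a star centered at `u` or `v` — sharing exactly
the edge `uv`. -/
theorem stmt_14 :
    ∀ S : Finset Pt, 2 ≤ S.card → ConvexPos S → ∀ u v : Pt,
      IsHullEdge S (s(u, v)) →
      ∃ E_A E_B : Finset (Sym2 Pt), IsPST S E_A ∧ IsPST S E_B ∧
        (∀ e ∈ E_A, IsHullEdge S e) ∧
        (E_B = starAt S u ∨ E_B = starAt S v) ∧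
        s(u, v) ∈ E_A ∧ s(u, v) ∈ E_B ∧
        E_A ∩ E_B = {s(u, v)} ∧ NoCross (E_A ∪ E_B) := by
  intro S _ hS u v huv
  have main : ∃ hu : u ∈ S, ∃ hv : v ∈ S, u ≠ v ∧
      segment ℝ u v ⊆ frontier (convexHull ℝ (S : Set Pt)) := by
    obtain ⟨a, b, hab, ha, hb, hne, hf⟩ := huv
    rcases Sym2.eq_iff.1 hab with ⟨rfl, rfl⟩ | ⟨rfl, rfl⟩
    · exact ⟨ha, hb, hne, hf⟩
    · exact ⟨hb, ha, hne.symm, by rwa [segment_symm]⟩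
  obtain ⟨hu, hv, hne, hf⟩ := main
  by_cases hall : ∀ x ∈ S, x ≠ u → x ≠ v → 0 < ori u v x
  · obtain ⟨E, h1, h2, h3, h4, h5, h6, h7⟩ := oriented S hS u v hu hv hne hall
    exact ⟨E, starAt S u, h1, h2, h3, Or.inl rfl, h4, h5, h6, h7⟩
  · push Not at hall
    obtain ⟨y, hy, hyu, hyv, hle⟩ := hall
    have hlt : ori u v y < 0 :=
      lt_of_le_of_ne hle (convPos_ne hS hu hv hy hne hyu.symm hyv.symm)
    have hall' : ∀ x ∈ S, x ≠ v → x ≠ u → 0 < ori v u x := by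
      intro x hx hxv hxu
      rw [ori_swap]
      rcases lt_or_gt_of_ne (convPos_ne hS hu hv hx hne hxu.symm hxv.symm) with h | h
      · linarith
      · exact (hull_side hu hv hx hy hf h hlt).elim
    obtain ⟨E, h1, h2, h3, h4, h5, h6, h7⟩ := oriented S hS v u hv hu hne.symm hall'
    rw [Sym2.eq_swap] at h4 h5 h6
    exact ⟨E, starAt S v, h1, h2, h3, Or.inr rfl, h4, h5, h6, h7⟩
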